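/- For all Subjective Logic opinions T = (b_T,d_T,u_T) and C = (b_C,d_C,u_C), the combination W = T⊛C = (b_W,d_W,u_W) is itself a Subjective Logic opinion: b_W ≥ 0, d_W ≥ 0, u_W ≥ 0 and b_W + d_W + u_W = 1. -/

import Mathlib

/-- A Subjective Logic opinion: belief, disbelief, uncertainty. -/
def IsOpinion (b d u : ℝ) : Prop := 0 ≤ b ∧ 0 ≤ d ∧ 0 ≤ u ∧ b + d + u = 1

/-- The direction α_O of an opinion. -/
noncomputable def alphaO (b d u : ℝ) : ℝ :=
  if b = 1 then 0 else Real.arctan (Real.sqrt 3 * u / (2 * d + u))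

/-- The angle β_O of an opinion. -/
noncomputable def betaO (b d u : ℝ) : ℝ :=
  if d = 1 then Real.pi / 3 else Real.arctan (Real.sqrt 3 * u / (2 - 2 * d - u))

/-- The angle γ_O = π/3 − β_O. -/
noncomputable def gammaO (b d u : ℝ) : ℝ := Real.pi / 3 - betaO b d u

/-- The length |OU|. -/
noncomputable def distOU (b d u : ℝ) : ℝ := Real.sqrt ((1/3) * (1 + d - u)^2 + b^2)

/-- The angle δ_O. -/
noncomputable def deltaO (b d u : ℝ) : ℝ :=
  if u = 1 then 0 else Real.arcsin (b / distOU b d u)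

/-- The angle ε_O = π − γ_O − δ_O. -/
noncomputable def epsO (b d u : ℝ) : ℝ := Real.pi - gammaO b d u - deltaO b d u

/-- Cartesian x-coordinate of an opinion. -/
noncomputable def xO (d u : ℝ) : ℝ := (2 * d + u) / Real.sqrt 3

/-- Cartesian y-coordinate of an opinion. -/
noncomputable def yO (u : ℝ) : ℝ := u

/-- x-coordinate of the point M_O. -/
noncomputable def xM (b d u : ℝ) : ℝ :=
  (2 - yO u + Real.tan (alphaO b d u) * xO d u) / (Real.tan (alphaO b d u) + Real.sqrt 3)

/-- y-coordinate of the point M_O. -/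
noncomputable def yM (b d u : ℝ) : ℝ := -Real.sqrt 3 * xM b d u + 2

/-- The ratio r_O = |BO| / |BM_O|. -/
noncomputable def rO (b d u : ℝ) : ℝ :=
  Real.sqrt (xO d u ^ 2 + yO u ^ 2) / Real.sqrt (xM b d u ^ 2 + yM b d u ^ 2)

/-- The projected direction α' = (3/π)·α_C·ε_T − β_T. -/
noncomputable def alphaProj (bT dT uT bC dC uC : ℝ) : ℝ :=
  (3 / Real.pi) * alphaO bC dC uC * epsO bT dT uT - betaO bT dT uT

/-- The maximal length |TM_{C'}|. -/
noncomputable def Lmax (bT dT uT bC dC uC : ℝ) : ℝ :=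
  if alphaProj bT dT uT bC dC uC = Real.pi / 2 then 2 * bT
  else if alphaProj bT dT uT bC dC uC = -(Real.pi / 3) then (2 / Real.sqrt 3) * uT
  else if alphaProj bT dT uT bC dC uC = 2 * Real.pi / 3 then (2 / Real.sqrt 3) * (1 - uT)
  else (2 * Real.sqrt (Real.tan (alphaProj bT dT uT bC dC uC) ^ 2 + 1)
        / |Real.tan (alphaProj bT dT uT bC dC uC) + Real.sqrt 3|) * bT

/-- The length ℓ = |TC'| = r_C·|TM_{C'}|. -/
noncomputable def lenTC (bT dT uT bC dC uC : ℝ) : ℝ :=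
  rO bC dC uC * Lmax bT dT uT bC dC uC

/-- Uncertainty of the combination W = T⊛C. -/
noncomputable def uW (bT dT uT bC dC uC : ℝ) : ℝ :=
  uT + Real.sin (alphaProj bT dT uT bC dC uC) * lenTC bT dT uT bC dC uC

/-- Disbelief of the combination W = T⊛C. -/
noncomputable def dW (bT dT uT bC dC uC : ℝ) : ℝ :=
  dT + (uT - uW bT dT uT bC dC uC) * Real.cos (Real.pi / 3)
    + Real.cos (alphaProj bT dT uT bC dC uC) * Real.sin (Real.pi / 3)
      * lenTC bT dT uT bC dC uC

/-- Belief of the combination W = T⊛C. -/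
noncomputable def bW (bT dT uT bC dC uC : ℝ) : ℝ :=
  1 - dW bT dT uT bC dC uC - uW bT dT uT bC dC uC

/-!
In Cartesian coordinates `W` is reached from `T` by moving the length `r_C * L` in the direction
`α'`.  Such a motion of length `ℓ` in direction `θ` changes the three barycentric coordinates by
`-ℓ sin (θ + π/3)`, `ℓ sin (π/3 - θ)` and `ℓ sin θ`.  Since `3 α_C / π ∈ [0, 1]`, the direction `α'`
lies between `-β_T`, which points from `T` to `D`, and `2π/3 - δ_T`, which points from `T` to `U`.
Hence the ray from `T` in direction `α'` leaves the triangle through the side `DU`, and `L` is the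
distance at which it does so.  As `0 ≤ r_C ≤ 1`, `W` lies on the segment from `T` to that exit
point, and the triangle is convex.
-/

open Real

lemma sqrt_sq_add_sq_mul_cos_arctan_div {x : ℝ} (hx : 0 < x) (y : ℝ) :
    √(x ^ 2 + y ^ 2) * cos (arctan (y / x)) = x := by
  have hsum : x ^ 2 + y ^ 2 = x ^ 2 * (1 + (y / x) ^ 2) := by field_simp
  rw [cos_arctan, hsum, sqrt_mul (sq_nonneg x), sqrt_sq hx.le, mul_assoc,
    mul_one_div_cancel (by positivity), mul_one]

lemma sqrt_sq_add_sq_mul_sin_arctan_div {x : ℝ} (hx : 0 < x) (y : ℝ) :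
    √(x ^ 2 + y ^ 2) * sin (arctan (y / x)) = y := by
  rw [← tan_mul_cos (cos_arctan_pos _).ne', tan_arctan, mul_left_comm,
    sqrt_sq_add_sq_mul_cos_arctan_div hx, div_mul_cancel₀ _ hx.ne']

lemma sin_pi_div_three_sub_add_sin (θ : ℝ) : sin (π / 3 - θ) + sin θ = sin (θ + π / 3) := by
  rw [sin_sub, sin_add, cos_pi_div_three, sin_pi_div_three]
  ring

lemma two_mul_sqrt_tan_sq_add_one_div_abs {θ : ℝ} (hcos : cos θ ≠ 0) :
    2 * √(tan θ ^ 2 + 1) / |tan θ + √3| = |sin (θ + π / 3)|⁻¹ := by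
  have hsec : √(tan θ ^ 2 + 1) = |cos θ|⁻¹ := by
    rw [add_comm, ← inv_inv (1 + tan θ ^ 2), inv_one_add_tan_sq hcos, ← inv_pow, sqrt_sq_eq_abs,
      abs_inv]
  have hsum : tan θ + √3 = 2 * sin (θ + π / 3) / cos θ := by
    rw [sin_add, cos_pi_div_three, sin_pi_div_three, tan_eq_sin_div_cos]
    field_simp
  rw [hsec, hsum, abs_div, abs_mul, abs_two]
  have : |cos θ| ≠ 0 := abs_ne_zero.2 hcos
  field_simp

/-- The angle at a vertex `V` of an equilateral triangle `VPQ` between the side `VP` and the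
direction to the point with barycentric coordinates `x` at `P` and `y` at `Q`.  All of `α_O`, `β_O`
and `δ_O` are of this form.  At `V` itself, where `x = y = 0`, the angle is `0`, which agrees with
the conventions for `α_O` and `δ_O` but not with `β_O = π/3`. -/
noncomputable def cornerAngle (x y : ℝ) : ℝ := arctan (√3 * y / (2 * x + y))

/-- The distance from a vertex `V` of an equilateral triangle `VPQ` of height `1` to the point with
barycentric coordinates `x` at `P` and `y` at `Q`, the radius that belongs to `cornerAngle x y`. -/
noncomputable def cornerDist (x y : ℝ) : ℝ := √(((2 * x + y) / √3) ^ 2 + y ^ 2)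

section Corner

variable {x y : ℝ}

lemma cornerAngle_mem_Icc (hx : 0 ≤ x) (hy : 0 ≤ y) : cornerAngle x y ∈ Set.Icc 0 (π / 3) := by
  refine ⟨arctan_nonneg.2 (by positivity), ?_⟩
  rw [← arctan_sqrt_three, cornerAngle, mul_div_assoc]
  refine arctan_mono (mul_le_of_le_one_right (sqrt_nonneg 3) ?_)
  exact div_le_one_of_le₀ (by linarith) (by positivity)

lemma cornerDist_nonneg (x y : ℝ) : 0 ≤ cornerDist x y := sqrt_nonneg _

lemma cornerDist_pos (hxy : 0 < 2 * x + y) : 0 < cornerDist x y := by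
  unfold cornerDist
  positivity

lemma cornerDist_mul_cos_cornerAngle (hx : 0 ≤ x) (hy : 0 ≤ y) :
    cornerDist x y * cos (cornerAngle x y) = (2 * x + y) / √3 := by
  rcases (by positivity : 0 ≤ 2 * x + y).eq_or_lt' with hxy | hxy
  · obtain ⟨rfl, rfl⟩ : x = 0 ∧ y = 0 := ⟨by linarith, by linarith⟩
    simp [cornerDist]
  · rw [cornerDist, cornerAngle, mul_comm √3 y, ← div_div_eq_mul_div]
    exact sqrt_sq_add_sq_mul_cos_arctan_div (by positivity) y

lemma cornerDist_mul_sin_cornerAngle (hx : 0 ≤ x) (hy : 0 ≤ y) :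
    cornerDist x y * sin (cornerAngle x y) = y := by
  rcases (by positivity : 0 ≤ 2 * x + y).eq_or_lt' with hxy | hxy
  · obtain ⟨rfl, rfl⟩ : x = 0 ∧ y = 0 := ⟨by linarith, by linarith⟩
    simp [cornerDist]
  · rw [cornerDist, cornerAngle, mul_comm √3 y, ← div_div_eq_mul_div]
    exact sqrt_sq_add_sq_mul_sin_arctan_div (by positivity) y

lemma mul_sin_add_pi_div_three_add_mul_sin (hx : 0 ≤ x) (hy : 0 ≤ y) (θ : ℝ) :
    y * sin (θ + π / 3) + x * sin θ =
      √3 / 2 * cornerDist x y * sin (θ + cornerAngle x y) := by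
  calc y * sin (θ + π / 3) + x * sin θ
      = √3 / 2 * (sin θ * ((2 * x + y) / √3) + cos θ * y) := by
        rw [sin_add, cos_pi_div_three, sin_pi_div_three]
        field_simp
        ring
    _ = √3 / 2 * (sin θ * (cornerDist x y * cos (cornerAngle x y)) +
          cos θ * (cornerDist x y * sin (cornerAngle x y))) := by
        rw [cornerDist_mul_cos_cornerAngle hx hy, cornerDist_mul_sin_cornerAngle hx hy]
    _ = √3 / 2 * cornerDist x y * sin (θ + cornerAngle x y) := by
        rw [sin_add]
        ring

lemma mul_sin_add_pi_div_three_add_mul_sin_nonneg (hx : 0 ≤ x) (hy : 0 ≤ y) {θ : ℝ}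
    (hθ : θ + cornerAngle x y ∈ Set.Icc 0 π) : 0 ≤ y * sin (θ + π / 3) + x * sin θ := by
  rw [mul_sin_add_pi_div_three_add_mul_sin hx hy]
  exact mul_nonneg (mul_nonneg (by positivity) (cornerDist_nonneg x y))
    (sin_nonneg_of_mem_Icc hθ)

end Corner

namespace IsOpinion

variable {b d u : ℝ}

lemma belief_nonneg (h : IsOpinion b d u) : 0 ≤ b := h.1

lemma disbelief_nonneg (h : IsOpinion b d u) : 0 ≤ d := h.2.1

lemma uncertainty_nonneg (h : IsOpinion b d u) : 0 ≤ u := h.2.2.1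

lemma sum_eq_one (h : IsOpinion b d u) : b + d + u = 1 := h.2.2.2

lemma alphaO_eq_cornerAngle (h : IsOpinion b d u) : alphaO b d u = cornerAngle d u := by
  obtain ⟨-, hd, hu, hsum⟩ := h
  unfold alphaO
  split_ifs with hb
  · obtain ⟨rfl, rfl⟩ : d = 0 ∧ u = 0 := ⟨by linarith, by linarith⟩
    simp [cornerAngle]
  · rfl

lemma betaO_eq_cornerAngle (h : IsOpinion b d u) (hd : d ≠ 1) :
    betaO b d u = cornerAngle b u := by
  rw [betaO, if_neg hd, cornerAngle, show 2 - 2 * d - u = 2 * b + u by linarith [h.sum_eq_one]]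

lemma distOU_eq_cornerDist (h : IsOpinion b d u) : distOU b d u = cornerDist d b := by
  rw [distOU, cornerDist, div_pow, sq_sqrt zero_le_three,
    show 1 + d - u = 2 * d + b by linarith [h.sum_eq_one], one_div_mul_eq_div]

lemma deltaO_eq_cornerAngle (h : IsOpinion b d u) : deltaO b d u = cornerAngle d b := by
  have hdist := h.distOU_eq_cornerDist
  obtain ⟨hb, hd, -, hsum⟩ := h
  unfold deltaO
  split_ifs with hu
  · obtain ⟨rfl, rfl⟩ : b = 0 ∧ d = 0 := ⟨by linarith, by linarith⟩
    simp [cornerAngle]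
  · have hpos : 0 < 2 * d + b := by
      have : u < 1 := lt_of_le_of_ne (by linarith) hu
      linarith
    have hsin : b / distOU b d u = sin (cornerAngle d b) := by
      rw [hdist, div_eq_iff (cornerDist_pos hpos).ne', mul_comm,
        cornerDist_mul_sin_cornerAngle hd hb]
    obtain ⟨hangle0, hangle1⟩ := cornerAngle_mem_Icc hd hb
    rw [hsin, arcsin_sin (by linarith [pi_pos]) (by linarith [pi_pos])]

lemma alphaO_mem_Icc (h : IsOpinion b d u) : alphaO b d u ∈ Set.Icc 0 (π / 3) := by
  rw [h.alphaO_eq_cornerAngle]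
  exact cornerAngle_mem_Icc h.disbelief_nonneg h.uncertainty_nonneg

lemma betaO_mem_Icc (h : IsOpinion b d u) : betaO b d u ∈ Set.Icc 0 (π / 3) := by
  by_cases hd : d = 1
  · rw [betaO, if_pos hd]
    exact ⟨by positivity, le_rfl⟩
  · rw [h.betaO_eq_cornerAngle hd]
    exact cornerAngle_mem_Icc h.belief_nonneg h.uncertainty_nonneg

lemma deltaO_mem_Icc (h : IsOpinion b d u) : deltaO b d u ∈ Set.Icc 0 (π / 3) := by
  rw [h.deltaO_eq_cornerAngle]
  exact cornerAngle_mem_Icc h.disbelief_nonneg h.belief_nonneg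

lemma tan_alphaO (h : IsOpinion b d u) : tan (alphaO b d u) = √3 * u / (2 * d + u) := by
  rw [h.alphaO_eq_cornerAngle, cornerAngle, tan_arctan]

lemma xO_eq_mul_xM (h : IsOpinion b d u) : xO d u = (d + u) * xM b d u := by
  have htan := h.tan_alphaO
  obtain ⟨-, hd, hu, -⟩ := h
  rcases (by positivity : 0 ≤ 2 * d + u).eq_or_lt' with hdu | hdu
  · obtain ⟨rfl, rfl⟩ : d = 0 ∧ u = 0 := ⟨by linarith, by linarith⟩
    simp [xO]
  · have hden : √3 * u / (2 * d + u) + √3 ≠ 0 := by positivity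
    rw [xM, htan, mul_div_assoc', eq_div_iff hden, xO, yO]
    field_simp
    ring

lemma yO_eq_mul_yM (h : IsOpinion b d u) : yO u = (d + u) * yM b d u := by
  have hx : (d + u) * yM b d u = -√3 * xO d u + 2 * (d + u) := by
    rw [h.xO_eq_mul_xM, yM]
    ring
  rw [hx, xO, yO]
  field_simp
  ring

lemma rO_mem_Icc (h : IsOpinion b d u) : rO b d u ∈ Set.Icc 0 1 := by
  refine ⟨div_nonneg (sqrt_nonneg _) (sqrt_nonneg _), ?_⟩
  have hx := h.xO_eq_mul_xM
  have hy := h.yO_eq_mul_yM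
  obtain ⟨hb, hd, hu, hsum⟩ := h
  rw [rO, hx, hy, mul_pow, mul_pow, ← mul_add, sqrt_mul (sq_nonneg _),
    sqrt_sq (add_nonneg hd hu), mul_div_assoc]
  exact mul_le_one₀ (by linarith) (by positivity) (div_self_le_one _)

lemma alphaProj_mem_Icc {bC dC uC : ℝ} (hT : IsOpinion b d u) (hC : IsOpinion bC dC uC) :
    alphaProj b d u bC dC uC ∈ Set.Icc (-betaO b d u) (2 * π / 3 - deltaO b d u) := by
  obtain ⟨hα0, hα1⟩ := hC.alphaO_mem_Icc
  have hratio0 : 0 ≤ 3 / π * alphaO bC dC uC := by positivity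
  have hratio1 : 3 / π * alphaO bC dC uC ≤ 1 := by
    rw [div_mul_eq_mul_div, div_le_one pi_pos]
    linarith
  have hε : epsO b d u = 2 * π / 3 + betaO b d u - deltaO b d u := by
    rw [epsO, gammaO]
    ring
  have hε0 : 0 ≤ epsO b d u := by linarith [hT.betaO_mem_Icc.1, hT.deltaO_mem_Icc.2, pi_pos]
  have hlower := mul_nonneg hratio0 hε0
  have hupper := mul_le_of_le_one_left hε0 hratio1
  constructor <;> rw [alphaProj] <;> linarith

end IsOpinion

lemma Lmax_mul_sin_add_pi_div_three {bT dT uT bC dC uC : ℝ}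
    (hθ : alphaProj bT dT uT bC dC uC ∈ Set.Ioo (-(π / 3)) (2 * π / 3)) :
    Lmax bT dT uT bC dC uC * sin (alphaProj bT dT uT bC dC uC + π / 3) = bT := by
  unfold Lmax
  generalize alphaProj bT dT uT bC dC uC = θ at hθ ⊢
  obtain ⟨hθ0, hθ1⟩ := hθ
  have hsin : 0 < sin (θ + π / 3) := sin_pos_of_pos_of_lt_pi (by linarith) (by linarith)
  rw [if_neg hθ0.ne', if_neg hθ1.ne]
  split_ifs with hvert
  · have : sin (π / 2 + π / 3) = 1 / 2 := by rw [add_comm, sin_add_pi_div_two, cos_pi_div_three]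
    rw [hvert, this]
    ring
  · have hcos : cos θ ≠ 0 := by
      intro hzero
      have : sin (π / 2 - θ) = 0 := by rw [sin_pi_div_two_sub, hzero]
      rw [sin_eq_zero_iff_of_lt_of_lt (by linarith) (by linarith)] at this
      exact hvert (by linarith)
    rw [two_mul_sqrt_tan_sq_add_one_div_abs hcos, abs_of_pos hsin, mul_right_comm,
      inv_mul_cancel₀ hsin.ne', one_mul]

/-- The point reached from the point with barycentric coordinates `(b, d, u)` by moving the distance
`ℓ` in the direction `θ`, measured anticlockwise from the side `BD`, lies in the opinion triangle.
The displacement is expressed in barycentric coordinates. -/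
def IsOpinionAt (b d u θ ℓ : ℝ) : Prop :=
  IsOpinion (b - ℓ * sin (θ + π / 3)) (d + ℓ * sin (π / 3 - θ)) (u + ℓ * sin θ)

namespace IsOpinion

variable {b d u θ : ℝ}

lemma isOpinionAt_of_nonneg {ℓ : ℝ} (h : IsOpinion b d u) (hb : 0 ≤ b - ℓ * sin (θ + π / 3))
    (hd : 0 ≤ d + ℓ * sin (π / 3 - θ)) (hu : 0 ≤ u + ℓ * sin θ) : IsOpinionAt b d u θ ℓ := by
  refine ⟨hb, hd, hu, ?_⟩
  rw [← sin_pi_div_three_sub_add_sin]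
  linarith [h.sum_eq_one]

lemma isOpinionAt_mul {r ℓ : ℝ} (h : IsOpinion b d u) (hℓ : IsOpinionAt b d u θ ℓ)
    (hr : r ∈ Set.Icc 0 1) : IsOpinionAt b d u θ (r * ℓ) := by
  have hconv {p q : ℝ} (hp : 0 ≤ p) (hpq : 0 ≤ p + ℓ * q) : 0 ≤ p + r * ℓ * q := by
    linarith [mul_nonneg (sub_nonneg.2 hr.2) hp, mul_nonneg hr.1 hpq]
  obtain ⟨hb', hd', hu', -⟩ := hℓ
  rw [sub_eq_add_neg, ← mul_neg] at hb'
  refine h.isOpinionAt_of_nonneg ?_ (hconv h.disbelief_nonneg hd') (hconv h.uncertainty_nonneg hu')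
  rw [sub_eq_add_neg, ← mul_neg]
  exact hconv h.belief_nonneg hb'

lemma isOpinionAt_neg_pi_div_three (h : IsOpinion b d u) :
    IsOpinionAt b d u (-(π / 3)) (2 / √3 * u) := by
  have hheight : 2 / √3 * u * (√3 / 2) = u := by field_simp
  apply h.isOpinionAt_of_nonneg
  · simpa using h.belief_nonneg
  · have : sin (π / 3 - -(π / 3)) = √3 / 2 := by
      rw [← sin_pi_sub, ← sin_pi_div_three]
      ring_nf
    rw [this, hheight]
    exact add_nonneg h.disbelief_nonneg h.uncertainty_nonneg
  · simp [sin_pi_div_three, hheight]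

lemma isOpinionAt_two_pi_div_three (h : IsOpinion b d u) (hb : b = 0) :
    IsOpinionAt b d u (2 * π / 3) (2 / √3 * (1 - u)) := by
  have hheight : 2 / √3 * (1 - u) * (√3 / 2) = 1 - u := by field_simp
  apply h.isOpinionAt_of_nonneg
  · rw [show 2 * π / 3 + π / 3 = π by ring, sin_pi, mul_zero, sub_zero]
    exact h.belief_nonneg
  · rw [show π / 3 - 2 * π / 3 = -(π / 3) by ring, sin_neg, sin_pi_div_three, mul_neg, hheight]
    linarith [h.sum_eq_one]
  · rw [show 2 * π / 3 = π - π / 3 by ring, sin_pi_sub, sin_pi_div_three, hheight]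
    linarith

-- The exit length is `b / sin (θ + π/3)`.  The next two lemmas are the nonnegativity of `u` and `d`
-- at the exit point, multiplied by `sin (θ + π/3)`.  Up to constant factors these are the
-- cross products of the direction `θ` with the vectors to `D` and `U`, whose
-- signs the range of `θ` determines.
lemma uncertainty_at_exit_nonneg (h : IsOpinion b d u) (hθ : θ + betaO b d u ∈ Set.Icc 0 π) :
    0 ≤ u * sin (θ + π / 3) + b * sin θ := by
  by_cases hd : d = 1
  · obtain ⟨hb0, -, hu0, hsum⟩ := h
    obtain ⟨rfl, rfl⟩ : b = 0 ∧ u = 0 := ⟨by linarith, by linarith⟩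
    simp
  · rw [h.betaO_eq_cornerAngle hd] at hθ
    exact mul_sin_add_pi_div_three_add_mul_sin_nonneg h.belief_nonneg h.uncertainty_nonneg hθ

lemma disbelief_at_exit_nonneg (h : IsOpinion b d u)
    (hθ : θ + π / 3 + deltaO b d u ∈ Set.Icc 0 π) :
    0 ≤ d * sin (θ + π / 3) + b * sin (π / 3 - θ) := by
  rw [h.deltaO_eq_cornerAngle] at hθ
  have hsin : sin (θ + π / 3 + π / 3) = sin (π / 3 - θ) := by
    rw [← sin_pi_sub]
    ring_nf
  rw [← hsin, add_comm]
  exact mul_sin_add_pi_div_three_add_mul_sin_nonneg h.disbelief_nonneg h.belief_nonneg hθ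

lemma isOpinionAt_of_mul_sin_eq {ℓ : ℝ} (h : IsOpinion b d u)
    (hθ : θ ∈ Set.Icc (-betaO b d u) (2 * π / 3 - deltaO b d u))
    (hsin : 0 < sin (θ + π / 3)) (hexit : ℓ * sin (θ + π / 3) = b) : IsOpinionAt b d u θ ℓ := by
  have hβ := h.betaO_mem_Icc
  have hδ := h.deltaO_mem_Icc
  have hd := h.disbelief_at_exit_nonneg (θ := θ)
    ⟨by linarith [hθ.1, hβ.2, hδ.1], by linarith [hθ.2]⟩
  have hu := h.uncertainty_at_exit_nonneg (θ := θ)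
    ⟨by linarith [hθ.1], by linarith [hθ.2, hβ.2, hδ.1]⟩
  refine h.isOpinionAt_of_nonneg (sub_nonneg.2 hexit.le) ?_ ?_
  · refine nonneg_of_mul_nonneg_left (hd.trans_eq ?_) hsin
    rw [← hexit]
    ring
  · refine nonneg_of_mul_nonneg_left (hu.trans_eq ?_) hsin
    rw [← hexit]
    ring

lemma isOpinionAt_Lmax {bC dC uC : ℝ} (hT : IsOpinion b d u) (hC : IsOpinion bC dC uC) :
    IsOpinionAt b d u (alphaProj b d u bC dC uC) (Lmax b d u bC dC uC) := by
  have hθ := hT.alphaProj_mem_Icc hC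
  have hβ := hT.betaO_mem_Icc
  have hδ := hT.deltaO_mem_Icc
  have hlower : -(π / 3) ≤ alphaProj b d u bC dC uC := by linarith [hθ.1, hβ.2]
  have hupper : alphaProj b d u bC dC uC ≤ 2 * π / 3 := by linarith [hθ.2, hδ.1]
  rcases hlower.eq_or_lt' with htoD | hlower
  · rw [Lmax, htoD, if_neg (by linarith [pi_pos]), if_pos rfl]
    exact hT.isOpinionAt_neg_pi_div_three
  rcases hupper.eq_or_lt with htoU | hupper
  · have hb : b = 0 := by
      have hangle : cornerAngle d b = 0 := by
        linarith [hT.deltaO_eq_cornerAngle, hθ.2, hδ.1]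
      rw [← cornerDist_mul_sin_cornerAngle hT.disbelief_nonneg hT.belief_nonneg, hangle,
        sin_zero, mul_zero]
    rw [Lmax, htoU, if_neg (by linarith [pi_pos]), if_neg (by linarith [pi_pos]), if_pos rfl]
    exact hT.isOpinionAt_two_pi_div_three hb
  · exact hT.isOpinionAt_of_mul_sin_eq hθ
      (sin_pos_of_pos_of_lt_pi (by linarith) (by linarith))
      (Lmax_mul_sin_add_pi_div_three ⟨hlower, hupper⟩)

end IsOpinion

section Combination

variable (bT dT uT bC dC uC : ℝ)

lemma dW_eq : dW bT dT uT bC dC uC =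
    dT + lenTC bT dT uT bC dC uC * sin (π / 3 - alphaProj bT dT uT bC dC uC) := by
  rw [dW, uW, sin_sub]
  ring

lemma uW_eq : uW bT dT uT bC dC uC =
    uT + lenTC bT dT uT bC dC uC * sin (alphaProj bT dT uT bC dC uC) := by
  rw [uW, mul_comm]

variable {bT dT uT}

lemma IsOpinion.bW_eq (h : IsOpinion bT dT uT) : bW bT dT uT bC dC uC =
    bT - lenTC bT dT uT bC dC uC * sin (alphaProj bT dT uT bC dC uC + π / 3) := by
  rw [bW, dW_eq, uW_eq, ← sin_pi_div_three_sub_add_sin]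
  linarith [h.sum_eq_one]

end Combination

/-- For all Subjective Logic opinions T and C, the combination W = T⊛C is itself a
Subjective Logic opinion. -/
theorem stmt13 (bT dT uT bC dC uC : ℝ)
    (hT : IsOpinion bT dT uT) (hC : IsOpinion bC dC uC) :
    IsOpinion (bW bT dT uT bC dC uC) (dW bT dT uT bC dC uC) (uW bT dT uT bC dC uC) := by
  rw [hT.bW_eq, dW_eq, uW_eq]
  exact hT.isOpinionAt_mul (hT.isOpinionAt_Lmax hC) hC.rO_mem_Icc
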